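/- arXiv:1807.00497 — 2 statements merged into one kernel-verified Lean document; each statement's English description precedes it below -/
import Mathlib

section
/- Let b > 0, let v₊, v₋ ∈ ℝ^{n+2} be null with ζ := ⟨v₊,v₋⟩ > 0, and let Δ:(0,b) → End(ℝ^{n+2}) be continuous and bounded with each Δ(t) skew-adjoint with respect to the Minkowski form. Define Ψ(t) := −(1/t)·(v₋∧v₊) + Δ(t), and for each p ∈ (0,b) let G_p:(0,b) → End(ℝ^{n+2}) be differentiable with G_p′(t) = G_p(t)∘Ψ(t) and G_p(p) = id. Then there exist a constant C > 0 and b̃ ∈ (0,b] such that for all p ∈ (0,b̃) and all t ∈ (0,p]: (t/p)^ζ·‖G_p(t)‖ ≤ C and (t/p)^ζ·‖G_p(t)^{−1}‖ ≤ C. -/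
open scoped BigOperators Topology
open Filter Set MeasureTheory

noncomputable section

abbrev E (n : ℕ) := EuclideanSpace ℝ (Fin (n + 2))

/-- Minkowski inner product of signature (n+1,1). -/
def mink {n : ℕ} (x y : E n) : ℝ :=
  ∑ i, (if i = Fin.last (n + 1) then (-1 : ℝ) else 1) * x i * y i

variable {n : ℕ}

lemma mink_comm (x y : E n) : mink x y = mink y x :=
  Finset.sum_congr rfl fun i _ => by ring

lemma mink_add_right (v x y : E n) : mink v (x + y) = mink v x + mink v y := by
  simp [mink, mul_add, Finset.sum_add_distrib]

lemma mink_smul_right (v : E n) (c : ℝ) (x : E n) : mink v (c • x) = c * mink v x := by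
  unfold mink
  rw [Finset.mul_sum]
  refine Finset.sum_congr rfl fun i _ => ?_
  simp only [PiLp.smul_apply, smul_eq_mul]
  ring

lemma mink_add_left (x y v : E n) : mink (x + y) v = mink x v + mink y v := by
  rw [mink_comm, mink_add_right, mink_comm v x, mink_comm v y]

lemma mink_smul_left (c : ℝ) (x v : E n) : mink (c • x) v = c * mink x v := by
  rw [mink_comm, mink_smul_right, mink_comm v x]

/-- `v ∧ w` as an endomorphism: `x ↦ ⟨v,x⟩ w − ⟨w,x⟩ v`. -/
def wedge {n : ℕ} (v w : E n) : E n →L[ℝ] E n :=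
  LinearMap.toContinuousLinearMap
    { toFun := fun x => mink v x • w - mink w x • v
      map_add' := by
        intro x y
        simp only [mink_add_right, add_smul]
        abel
      map_smul' := by
        intro c x
        simp only [mink_smul_right, RingHom.id_apply, mul_smul, smul_sub] }

/-- rank one endomorphism `vw* : x ↦ ⟨x,w⟩ v`. -/
def rankOne {n : ℕ} (v w : E n) : E n →L[ℝ] E n :=
  LinearMap.toContinuousLinearMap
    { toFun := fun x => mink x w • v
      map_add' := by
        intro x y
        simp only [mink_add_left, add_smul]
      map_smul' := by
        intro c x
        simp only [mink_smul_left, RingHom.id_apply, mul_smul] }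

lemma aux_wedge (vp vm : E n) (hvp : mink vp vp = 0) (hvm : mink vm vm = 0)
    (hζ : 0 < mink vp vm) :
    ∃ (u : Fin 3 × Fin (n+2) → E n) (a : Fin 3 × Fin (n+2) → ℝ),
      (∀ k, wedge vm vp (u k) = a k • u k) ∧ (∀ k, a k ≤ mink vp vm) ∧
      ∀ L : E n →L[ℝ] E n, ‖L‖ ≤ ∑ k, ‖L (u k)‖ := by
  have hw : ∀ x, wedge vm vp x = mink vm x • vp - mink vp x • vm := fun x => rfl
  have hc : mink vm vp = mink vp vm := mink_comm _ _
  set ζ := mink vp vm with hz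
  let e : Fin (n+2) → E n := fun j => EuclideanSpace.single j 1
  let U : Fin 3 → E n → E n := fun i x =>
    ![(ζ⁻¹ * mink vm x) • vp, (ζ⁻¹ * mink vp x) • vm,
      x + (-(ζ⁻¹ * mink vm x)) • vp + (-(ζ⁻¹ * mink vp x)) • vm] i
  have hU : ∀ x, ∑ i, U i x = x := by
    intro x
    simp only [U, Fin.sum_univ_three, Matrix.cons_val_zero, Matrix.cons_val_one, Matrix.cons_val]
    module
  refine ⟨fun k => U k.1 (e k.2), fun k => ![ζ, -ζ, 0] k.1, ?_, ?_, ?_⟩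
  · rintro ⟨i, j⟩
    fin_cases i
    · simp [U, hw, mink_smul_right, hvp, hc, ← hz, smul_smul]; congr 1; ring
    · simp [U, hw, mink_smul_right, hvm, ← hz, smul_smul]; congr 1; ring
    · have e1 : ∀ y, ζ * (ζ⁻¹ * y) = y := fun y => by field_simp
      have e2 : ∀ y, ζ⁻¹ * y * ζ = y := fun y => by field_simp
      simp [U, hw, mink_add_right, mink_smul_right, hvm, hvp, hc, ← hz, e2, ← neg_smul, -neg_smul]
  · rintro ⟨i, j⟩
    fin_cases i <;> simp <;> linarith
  · intro L
    refine L.opNorm_le_bound (by positivity) fun x => ?_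
    have hx : x = ∑ j, x j • e j := by
      ext i
      simp [e, Finset.sum_apply, Pi.single_apply]
    have h1 : L x = ∑ j, x j • ∑ i, L (U i (e j)) := by
      conv_lhs => rw [hx]
      rw [map_sum]
      refine Finset.sum_congr rfl fun j _ => ?_
      rw [map_smul, ← map_sum, hU]
    rw [h1, Fintype.sum_prod_type_right, Finset.sum_mul]
    refine (norm_sum_le _ _).trans (Finset.sum_le_sum fun j _ => ?_)
    rw [norm_smul, mul_comm]
    exact mul_le_mul (norm_sum_le _ _) (PiLp.norm_apply_le x j) (norm_nonneg _) (by positivity)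

lemma aux_bound (b : ℝ) (hb : 0 < b) (ζ : ℝ) (A : E n →L[ℝ] E n)
    (u : Fin 3 × Fin (n+2) → E n) (a : Fin 3 × Fin (n+2) → ℝ)
    (hu : ∀ k, A (u k) = a k • u k) (ha : ∀ k, a k ≤ ζ)
    (hL : ∀ L : E n →L[ℝ] E n, ‖L‖ ≤ ∑ k, ‖L (u k)‖)
    (Δ : ℝ → E n →L[ℝ] E n) (D : ℝ) (hD : ∀ t ∈ Set.Ioo (0:ℝ) b, ‖Δ t‖ ≤ D) :
    ∃ C : ℝ, 0 < C ∧ ∀ p ∈ Set.Ioo (0:ℝ) b, ∀ G : ℝ → E n →L[ℝ] E n, G p = 1 →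
      (∀ t ∈ Set.Ioo (0:ℝ) b, HasDerivAt G (G t * ((-t⁻¹) • A + Δ t)) t) →
      ∀ t ∈ Set.Ioc (0:ℝ) p, (t / p) ^ ζ * ‖G t‖ ≤ C := by
  have hD0 : 0 ≤ D := (norm_nonneg _).trans (hD (b/2) ⟨by linarith, by linarith⟩)
  set W := ∑ k, ‖u k‖ with hW
  have hW0 : 0 ≤ W := by positivity
  have huW : ∀ k, ‖u k‖ ≤ W := fun k =>
    Finset.single_le_sum (f := fun k => ‖u k‖) (fun i _ => norm_nonneg _) (Finset.mem_univ k)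
  set N : ℝ := ((Finset.univ : Finset (Fin 3 × Fin (n+2))).card : ℝ) with hN
  set M := 2 * D * W * N with hM
  have hM0 : 0 ≤ M := by positivity
  set Q := N * (Real.exp (M * b) * ∑ k, ‖u k‖ ^ 2) with hQ
  have hQ0 : 0 ≤ Q := by positivity
  refine ⟨Real.sqrt Q + 1, by positivity, ?_⟩
  intro p hp G hGp hG t ht
  have hp0 := hp.1
  let F : ℝ → E n →L[ℝ] E n := fun s => (s / p) ^ ζ • G s
  have hCS : ∀ s, (∑ k, ‖F s (u k)‖) ^ 2 ≤ N * ∑ k, ‖F s (u k)‖ ^ 2 := fun s =>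
    sq_sum_le_card_mul_sum_sq
  have hF : ∀ s ∈ Ioo (0:ℝ) b, ∀ k, HasDerivAt (fun s => F s (u k))
      (((ζ - a k) / s) • F s (u k) + F s (Δ s (u k))) s := by
    intro s hs k
    have hs0 : s ≠ 0 := hs.1.ne'
    have h1 : HasDerivAt (fun s : ℝ => (s / p) ^ ζ) ((ζ / s) * (s / p) ^ ζ) s := by
      have := ((hasDerivAt_id s).div_const p).rpow_const (p := ζ)
        (Or.inl (div_pos hs.1 hp0).ne')
      refine HasDerivAt.congr_deriv this (Eq.symm ?_)
      simp only [id]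
      rw [Real.rpow_sub_one (div_pos hs.1 hp0).ne']
      field_simp
    have h2 := (h1.smul (hG s hs)).clm_apply (hasDerivAt_const s (u k))
    refine HasDerivAt.congr_deriv h2 (Eq.symm ?_)
    simp [F, hu]
    module
  let q : ℝ → ℝ := fun s => ∑ k, ‖F s (u k)‖ ^ 2
  let q' : ℝ → ℝ := fun s => ∑ k, 2 * inner ℝ (F s (u k))
    (((ζ - a k) / s) • F s (u k) + F s (Δ s (u k)))
  have hq : ∀ s ∈ Ioo (0:ℝ) b, HasDerivAt q (q' s) s := fun s hs =>
    HasDerivAt.fun_sum fun k _ => (hF s hs k).norm_sq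
  have hq' : ∀ s ∈ Ioo (0:ℝ) b, - (M * q s) ≤ q' s := by
    intro s hs
    set S := ∑ k, ‖F s (u k)‖ with hS
    have hS0 : 0 ≤ S := by positivity
    have h1 : ∀ k, -(2 * D * W * S * ‖F s (u k)‖) ≤ 2 * inner ℝ (F s (u k))
        (((ζ - a k) / s) • F s (u k) + F s (Δ s (u k))) := by
      intro k
      rw [inner_add_right, inner_smul_right, real_inner_self_eq_norm_sq]
      have h2 : 0 ≤ (ζ - a k) / s * ‖F s (u k)‖ ^ 2 :=
        mul_nonneg (div_nonneg (sub_nonneg.2 (ha k)) hs.1.le) (by positivity)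
      have h3 := (abs_le.1 (abs_real_inner_le_norm (F s (u k)) (F s (Δ s (u k))))).1
      have h4 : ‖F s (Δ s (u k))‖ ≤ S * (D * W) :=
        ((F s).le_opNorm _).trans (mul_le_mul (hL _)
          (((Δ s).le_opNorm _).trans (mul_le_mul (hD s hs) (huW k) (norm_nonneg _) hD0))
          (norm_nonneg _) hS0)
      have h5 := mul_le_mul_of_nonneg_left h4 (norm_nonneg (F s (u k)))
      nlinarith
    have h6 := Finset.sum_le_sum fun k (_ : k ∈ Finset.univ) => h1 k
    rw [Finset.sum_neg_distrib, ← Finset.mul_sum, ← hS] at h6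
    refine le_trans ?_ h6
    have h7 := mul_le_mul_of_nonneg_left (hCS s) (show 0 ≤ 2 * D * W by positivity)
    rw [← hS] at h7
    simp only [q, hM]
    nlinarith
  have hmono : MonotoneOn (fun s => Real.exp (M * s) * q s) (Ioo 0 b) := by
    have hd : ∀ s ∈ Ioo (0:ℝ) b, HasDerivAt (fun s => Real.exp (M * s) * q s)
        (Real.exp (M * s) * (M * 1) * q s + Real.exp (M * s) * q' s) s := fun s hs =>
      (((hasDerivAt_id s).const_mul M).exp).mul (hq s hs)
    refine monotoneOn_of_deriv_nonneg (convex_Ioo 0 b)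
      (fun s hs => (hd s hs).continuousAt.continuousWithinAt)
      (fun s hs => (hd s (interior_subset hs)).differentiableAt.differentiableWithinAt) ?_
    intro s hs
    have hs := interior_subset hs
    rw [(hd s hs).deriv]
    have := hq' s hs
    have h8 : 0 ≤ Real.exp (M * s) * (M * q s + q' s) :=
      mul_nonneg (Real.exp_pos _).le (by linarith)
    linarith
  have hm := hmono ⟨ht.1, ht.2.trans_lt hp.2⟩ hp ht.2
  have hqp : q p = ∑ k, ‖u k‖ ^ 2 := by
    simp [q, F, hGp, div_self hp0.ne']
  have hq0 : 0 ≤ q t := by simp only [q]; positivity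
  have h9 : q t ≤ Real.exp (M * b) * ∑ k, ‖u k‖ ^ 2 := by
    have e1 : 1 ≤ Real.exp (M * t) := Real.one_le_exp (mul_nonneg hM0 ht.1.le)
    have e2 : Real.exp (M * p) ≤ Real.exp (M * b) :=
      Real.exp_le_exp.2 (mul_le_mul_of_nonneg_left hp.2.le hM0)
    simp only [hqp] at hm
    calc q t ≤ Real.exp (M * t) * q t := le_mul_of_one_le_left hq0 e1
      _ ≤ _ := hm
      _ ≤ _ := mul_le_mul_of_nonneg_right e2 (by positivity)
  have h10 : ‖F t‖ = (t / p) ^ ζ * ‖G t‖ := by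
    simp only [F]
    rw [norm_smul, Real.norm_of_nonneg (Real.rpow_nonneg (div_nonneg ht.1.le hp0.le) _)]
  rw [← h10]
  have h11 : ‖F t‖ ≤ Real.sqrt Q := by
    refine (hL _).trans (Real.le_sqrt_of_sq_le ?_)
    exact (hCS t).trans (mul_le_mul_of_nonneg_left h9 (by positivity))
  linarith

def Jm (n : ℕ) : E n →L[ℝ] E n :=
  LinearMap.toContinuousLinearMap
    { toFun := fun x => WithLp.toLp 2
        (fun i => (if i = Fin.last (n + 1) then (-1 : ℝ) else 1) * x i)
      map_add' := by
        intro x y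
        ext i
        simp [mul_add]
      map_smul' := by
        intro c x
        ext i
        simp }

lemma Jm_apply (x : E n) (i) : Jm n x i = (if i = Fin.last (n + 1) then (-1 : ℝ) else 1) * x i :=
  rfl

lemma Jm_sq : Jm n * Jm n = 1 := by
  ext x i
  simp only [ContinuousLinearMap.mul_apply, Jm_apply, ContinuousLinearMap.one_apply]
  split_ifs <;> simp

lemma Jm_norm : ‖Jm n‖ ≤ 1 := by
  refine ContinuousLinearMap.opNorm_le_bound _ zero_le_one fun x => ?_
  rw [one_mul, EuclideanSpace.norm_eq, EuclideanSpace.norm_eq]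
  apply le_of_eq
  congr 1
  refine Finset.sum_congr rfl fun i _ => ?_
  rw [Jm_apply]
  split_ifs <;> simp

lemma mink_eq (x y : E n) : mink x y = inner ℝ x (Jm n y) := by
  simp only [mink, PiLp.inner_apply, Jm_apply]
  refine Finset.sum_congr rfl fun i _ => ?_
  simp
  split_ifs <;> ring

lemma skew_star (T : E n →L[ℝ] E n) (h : ∀ x y : E n, mink (T x) y = - mink x (T y)) :
    T * Jm n + Jm n * star T = 0 := by
  have h1 : star T * Jm n = - (Jm n * T) := by
    ext1 y
    refine ext_inner_left ℝ fun x => ?_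
    have := h x y
    rw [mink_eq, mink_eq] at this
    simp [ContinuousLinearMap.star_eq_adjoint, ContinuousLinearMap.adjoint_inner_right, this]
  calc T * Jm n + Jm n * star T = T * Jm n + Jm n * (star T * Jm n) * Jm n := by
        rw [mul_assoc, mul_assoc, Jm_sq, mul_one]
    _ = T * Jm n - (Jm n * Jm n) * T * Jm n := by
        rw [h1]
        ext1 x
        simp [sub_eq_add_neg]
    _ = 0 := by rw [Jm_sq]; simp

lemma wedge_skew (v w x y : E n) : mink (wedge v w x) y = - mink x (wedge v w y) := by
  have hw : ∀ x, wedge v w x = mink v x • w + (- mink w x) • v := fun x => by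
    rw [neg_smul, ← sub_eq_add_neg]; rfl
  simp only [hw, mink_add_left, mink_add_right, mink_smul_left, mink_smul_right]
  rw [mink_comm x w, mink_comm x v]
  ring

lemma aux_inv (b : ℝ) (p : ℝ) (hp : p ∈ Ioo 0 b) (Ψ G : ℝ → E n →L[ℝ] E n)
    (hΨ : ∀ t ∈ Ioo (0:ℝ) b, Ψ t * Jm n + Jm n * star (Ψ t) = 0)
    (hG : ∀ t ∈ Ioo (0:ℝ) b, HasDerivAt G (G t * Ψ t) t) (hGp : G p = 1)
    (t : ℝ) (ht : t ∈ Ioo 0 b) : ‖Ring.inverse (G t)‖ ≤ ‖G t‖ := by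
  have hd : ∀ s ∈ Ioo (0:ℝ) b, HasDerivAt (fun s => G s * Jm n * star (G s)) 0 s := by
    intro s hs
    have := ((hG s hs).mul_const (Jm n)).mul (hG s hs).star
    refine HasDerivAt.congr_deriv this (Eq.symm ?_)
    rw [star_mul]
    calc (0 : E n →L[ℝ] E n) = G s * (Ψ s * Jm n + Jm n * star (Ψ s)) * star (G s) := by
          rw [hΨ s hs]; simp
      _ = _ := by noncomm_ring
  have hc : G t * Jm n * star (G t) = G p * Jm n * star (G p) :=
    isOpen_Ioo.is_const_of_deriv_eq_zero (f := fun s => G s * Jm n * star (G s))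
      isPreconnected_Ioo
      (fun s hs => (hd s hs).differentiableAt.differentiableWithinAt)
      (fun s hs => (hd s hs).deriv) ht hp
  have h1 : G t * (Jm n * star (G t) * Jm n) = 1 := by
    rw [← mul_assoc, ← mul_assoc, hc, hGp]
    simp [Jm_sq]
  have h2 : (Jm n * star (G t) * Jm n) * G t = 1 := by
    set K := Jm n * star (G t) * Jm n
    have h3 : (G t : E n →ₗ[ℝ] E n) * (K : E n →ₗ[ℝ] E n) = 1 := by
      ext1 x
      exact congrArg (fun L : E n →L[ℝ] E n => L x) h1
    have h4 := mul_eq_one_comm.1 h3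
    ext1 x
    exact congrArg (fun L : E n →ₗ[ℝ] E n => L x) h4
  have h5 : Ring.inverse (G t) = Jm n * star (G t) * Jm n :=
    Ring.inverse_unit (⟨G t, _, h1, h2⟩ : (E n →L[ℝ] E n)ˣ)
  rw [h5]
  calc _ ≤ ‖Jm n * star (G t)‖ * ‖Jm n‖ := norm_mul_le _ _
    _ ≤ (‖Jm n‖ * ‖star (G t)‖) * ‖Jm n‖ := by gcongr; exact norm_mul_le _ _
    _ ≤ (1 * ‖star (G t)‖) * 1 := by gcongr <;> exact Jm_norm
    _ = ‖G t‖ := by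
        rw [one_mul, mul_one]
        exact LinearIsometryEquiv.norm_map ContinuousLinearMap.adjoint (G t)

/-- Lemma 3.5: uniform bound for primitives of Minkowski pole forms. -/
theorem stmt9 {n : ℕ} (b : ℝ) (hb : 0 < b)
    (vp vm : E n) (hvp : mink vp vp = 0) (hvm : mink vm vm = 0)
    (hζ : 0 < mink vp vm)
    (Δ : ℝ → E n →L[ℝ] E n)
    (hΔc : ContinuousOn Δ (Set.Ioo 0 b))
    (hΔb : ∃ D : ℝ, ∀ t ∈ Set.Ioo (0:ℝ) b, ‖Δ t‖ ≤ D)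
    (hΔskew : ∀ t ∈ Set.Ioo (0:ℝ) b, ∀ x y : E n, mink (Δ t x) y = - mink x (Δ t y))
    (G : ℝ → ℝ → E n →L[ℝ] E n)
    (hG : ∀ p ∈ Set.Ioo (0:ℝ) b, ∀ t ∈ Set.Ioo (0:ℝ) b,
      HasDerivAt (G p) (G p t * ((-t⁻¹) • wedge vm vp + Δ t)) t)
    (hGp : ∀ p ∈ Set.Ioo (0:ℝ) b, G p p = 1) :
    ∃ C : ℝ, 0 < C ∧ ∃ b' ∈ Set.Ioc (0:ℝ) b, ∀ p ∈ Set.Ioo (0:ℝ) b', ∀ t ∈ Set.Ioc (0:ℝ) p,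
      (t / p) ^ (mink vp vm) * ‖G p t‖ ≤ C ∧
      (t / p) ^ (mink vp vm) * ‖Ring.inverse (G p t)‖ ≤ C := by
  obtain ⟨D, hD⟩ := hΔb
  obtain ⟨u, a, hu, ha, hL⟩ := aux_wedge vp vm hvp hvm hζ
  obtain ⟨C, hC, h⟩ := aux_bound b hb _ _ u a hu ha hL Δ D hD
  refine ⟨C, hC, b, ⟨hb, le_rfl⟩, fun p hp t ht => ?_⟩
  have h1 := h p hp (G p) (hGp p hp) (hG p hp) t ht
  refine ⟨h1, le_trans (mul_le_mul_of_nonneg_left ?_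
    (Real.rpow_nonneg (div_nonneg ht.1.le hp.1.le) _)) h1⟩
  refine aux_inv b p hp (fun t => (-t⁻¹) • wedge vm vp + Δ t) (G p) (fun s hs => ?_) (hG p hp)
    (hGp p hp) t ⟨ht.1, ht.2.trans_lt hp.2⟩
  refine skew_star _ fun x y => ?_
  simp only [ContinuousLinearMap.add_apply, ContinuousLinearMap.smul_apply, mink_add_left,
    mink_add_right, mink_smul_left, mink_smul_right, wedge_skew vm vp x y, hΔskew s hs x y]
  ring
end
end

section
/- Let ε,b > 0 and let c:(−ε,b) → ℝ^{n+2} be smooth with ⟨c(t),c(t)⟩ = 0, c(t) ≠ 0 and ⟨c′(t),c′(t)⟩ > 0 for all t. Let λ ∈ ℝ, fix p ∈ (0,b), and let T:(0,b) → End(ℝ^{n+2}) be differentiable with T(p) = id and T′(t) = −(λ/t)·(T(t)∘(c(t)∧c′(t))) for all t ∈ (0,b). Then the curve t ↦ T(t)(c(t)) converges projectively as t → 0⁺: there exist nonzero reals r(t) and a nonzero vector x ∈ ℝ^{n+2} such that r(t)·T(t)(c(t)) → x as t → 0⁺. -/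
open scoped BigOperators Topology
open Filter Set MeasureTheory

noncomputable section

variable {n : ℕ}

set_option linter.unusedSimpArgs false
lemma aux_lip {F : Type*} [NormedAddCommGroup F] [NormedSpace ℝ F] (f f' : ℝ → F) (s0 C : ℝ) (hs0 : 0 < s0)
    (hC : 0 ≤ C)
    (hf : ∀ s ∈ Ioc 0 s0, HasDerivAt f (f' s) s) (hb : ∀ s ∈ Ioc 0 s0, ‖f' s‖ ≤ C * ‖f s‖) :
    ∃ K, LipschitzOnWith K f (Ioc 0 s0) := by
  have hbd : ∀ x ∈ Ioc 0 s0, ‖f x‖ ≤ ‖f s0‖ * Real.exp (C * s0) := by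
    intro x hx
    have hd : ∀ y ∈ Icc 0 (s0 - x), HasDerivAt (fun τ => f (s0 - τ)) (-f' (s0 - y)) y := by
      intro y hy
      have h1 := hf (s0 - y) ⟨by linarith [hy.2, hx.1], by linarith [hy.1]⟩
      have h2 : HasDerivAt (fun τ : ℝ => s0 - τ) (-1) y := by
        simpa using (hasDerivAt_id y).const_sub s0
      have h3 := h1.scomp y h2
      rw [neg_one_smul] at h3
      exact h3
    have := norm_le_gronwallBound_of_norm_deriv_right_le (f := fun τ => f (s0 - τ))
      (f' := fun τ => - f' (s0 - τ)) (δ := ‖f s0‖) (K := C) (ε := 0) (a := 0) (b := s0 - x)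
      (fun y hy => (hd y hy).continuousAt.continuousWithinAt)
      (fun y hy => (hd y ⟨hy.1, hy.2.le⟩).hasDerivWithinAt) (by simp)
      (fun y hy => by
        simpa using hb (s0 - y) ⟨by linarith [hy.2, hx.1], by linarith [hy.1]⟩) (s0 - x)
      ⟨by linarith [hx.2], le_rfl⟩
    rw [gronwallBound_ε0] at this
    simp only [sub_sub_cancel, sub_zero] at this
    refine this.trans ?_
    gcongr
    linarith [hx.1]
  set M := C * (‖f s0‖ * Real.exp (C * s0)) with hM
  have hM0 : 0 ≤ M := by positivity
  refine ⟨⟨M, hM0⟩, Convex.lipschitzOnWith_of_nnnorm_hasDerivWithin_le (convex_Ioc 0 s0)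
    (fun x hx => (hf x hx).hasDerivWithinAt) (fun x hx => ?_)⟩
  have : ‖f' x‖ ≤ M := (hb x hx).trans (by rw [hM]; gcongr; exact hbd x hx)
  exact this

lemma aux_zero {F : Type*} [NormedAddCommGroup F] [NormedSpace ℝ F] (f f' : ℝ → F) (s0 C : ℝ) (hs0 : 0 < s0)
    (hC : 0 ≤ C)
    (hf : ∀ s ∈ Ioc 0 s0, HasDerivAt f (f' s) s) (hb : ∀ s ∈ Ioc 0 s0, ‖f' s‖ ≤ C * ‖f s‖)
    (h0 : Tendsto f (𝓝[>] 0) (𝓝 0)) : f s0 = 0 := by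
  have hbd : ∀ x ∈ Ioc 0 s0, ‖f s0‖ ≤ ‖f x‖ * Real.exp (C * s0) := by
    intro x hx
    have hd : ∀ y ∈ Icc x s0, HasDerivAt f (f' y) y := 
      fun y hy => hf y ⟨lt_of_lt_of_le hx.1 hy.1, hy.2⟩
    have := norm_le_gronwallBound_of_norm_deriv_right_le (f := f)
      (f' := f') (δ := ‖f x‖) (K := C) (ε := 0) (a := x) (b := s0)
      (fun y hy => (hd y hy).continuousAt.continuousWithinAt)
      (fun y hy => (hd y ⟨hy.1, hy.2.le⟩).hasDerivWithinAt) (by simp)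
      (fun y hy => by
        simpa using hb y ⟨lt_of_lt_of_le hx.1 hy.1, hy.2.le⟩) s0
      ⟨hx.2, le_rfl⟩
    rw [gronwallBound_ε0] at this
    refine this.trans ?_
    gcongr
    linarith [hx.1]
  have h1 : Tendsto (fun x => ‖f x‖ * Real.exp (C * s0)) (𝓝[>] 0) (𝓝 0) := by
    simpa using h0.norm.mul_const (Real.exp (C * s0))
  have h2 : ‖f s0‖ ≤ 0 := ge_of_tendsto h1 (by
    filter_upwards [Ioc_mem_nhdsGT hs0] with x hx using hbd x hx)
  simpa using h2

lemma tendsto_apply_aux {V : Type*} [NormedAddCommGroup V] [NormedSpace ℝ V] (l : Filter ℝ)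
    (F0 : V →L[ℝ] V) (c0 : V) (F : ℝ → V →L[ℝ] V) (c : ℝ → V) (hF : Tendsto F l (𝓝 F0))
    (hc : Tendsto c l (𝓝 c0)) : Tendsto (fun t => F t (c t)) l (𝓝 (F0 c0)) :=
  Filter.Tendsto.comp (g := fun q : (V →L[ℝ] V) × V => q.1 q.2) (f := fun t => (F t, c t))
    ((isBoundedBilinearMap_apply (𝕜 := ℝ) (E := V) (F := V)).continuous.tendsto (F0, c0))
      (hF.prodMk_nhds hc)

lemma wedge_apply (v w x : E n) : wedge v w x = mink v x • w - mink w x • v := rfl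

lemma mink_sub_right (v x y : E n) : mink v (x - y) = mink v x - mink v y := by
  have := mink_add_right v (x - y) y
  rw [sub_add_cancel] at this
  linarith

lemma mink_neg_right (v x : E n) : mink v (-x) = - mink v x := by
  have := mink_smul_right v (-1) x
  rw [neg_one_smul] at this
  linarith

lemma contDiff_wedge : ContDiff ℝ (⊤ : ℕ∞) (fun q : E n × E n => wedge q.1 q.2) := by
  rw [contDiff_clm_apply_iff]
  intro y
  simp only [wedge_apply, mink]
  fun_prop

lemma contDiffOn_wedge (c d : ℝ → E n) (U : Set ℝ) (hc : ContDiffOn ℝ (⊤ : ℕ∞) c U)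
    (hd : ContDiffOn ℝ (⊤ : ℕ∞) d U) :
    ContDiffOn ℝ (⊤ : ℕ∞) (fun t => wedge (c t) (d t)) U :=
  ContDiff.comp_contDiffOn (g := fun q : E n × E n => wedge q.1 q.2) (f := fun t => (c t, d t))
    contDiff_wedge (hc.prodMk hd)

lemma wedge_cube (v w : E n) (h1 : mink v v = 0) (h2 : mink v w = 0) :
    wedge v w * wedge v w * wedge v w = 0 := by
  have h3 : mink w v = 0 := by rw [mink_comm, h2]
  ext1 x
  simp [wedge_apply, mink_sub_right, mink_smul_right, mink_neg_right, h1, h2, h3]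

lemma hasDerivAt_mink (c : ℝ → E n) (c' : E n) (t : ℝ) (h : HasDerivAt c c' t) :
    HasDerivAt (fun s => mink (c s) (c s)) (2 * mink (c t) c') t := by
  unfold mink
  rw [Finset.mul_sum]
  refine HasDerivAt.fun_sum fun i _ => ?_
  have hi : HasDerivAt (fun s => c s i) (c' i) t := by
    exact (EuclideanSpace.proj (𝕜 := ℝ) i).hasFDerivAt.comp_hasDerivAt t h
  refine ((hi.const_mul _).mul hi).congr_deriv ?_
  ring

/-- main linear lemma -/
lemma aux_main {G : Type*} [NormedRing G] [NormedAlgebra ℝ G] (A A' T : ℝ → G) (p lam s0 : ℝ)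
    (hs0 : 0 < s0) (hp : s0 ^ 5 = p) 
    (hA : ∀ t ∈ Icc 0 p, HasDerivAt A (A' t) t) (hA' : ContinuousOn A' (Icc 0 p))
    (h3 : ∀ t ∈ Icc 0 p, A t * A t * A t = 0)
    (hT : ∀ t ∈ Ioc 0 p, HasDerivAt T ((-(lam / t)) • (T t * A t)) t) :
    ∃ C : ℝ, 0 ≤ C ∧ ∃ K : ℝ → G, (∀ s ∈ Ioc 0 s0, ‖K s‖ ≤ C) ∧ ∀ s ∈ Ioc 0 s0,
      HasDerivAt (fun s => T (s^5) * (1 + (lam * Real.log (s^5)) • A (s^5)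
        + ((lam * Real.log (s^5))^2/2) • (A (s^5) * A (s^5))))
        (T (s^5) * (1 + (lam * Real.log (s^5)) • A (s^5)
        + ((lam * Real.log (s^5))^2/2) • (A (s^5) * A (s^5))) * K s) s := by
  have hm : ∀ s ∈ Icc 0 s0, s^5 ∈ Icc 0 p := fun s hs =>
    ⟨by have := hs.1; positivity, by rw [← hp]; exact pow_le_pow_left₀ hs.1 hs.2 5⟩
  have hAc : ContinuousOn (fun s => A (s^5)) (Icc 0 s0) :=
    ContinuousOn.comp (t := Icc 0 p) (fun t ht => (hA t ht).continuousAt.continuousWithinAt)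
      (by fun_prop) hm
  have hAc' : ContinuousOn (fun s => A' (s^5)) (Icc 0 s0) :=
    ContinuousOn.comp (t := Icc 0 p) hA' (by fun_prop) hm
  let L : ℝ → ℝ := fun s => 5 * lam * (s * Real.log s)
  have hL : Continuous L := continuous_const.mul Real.continuous_mul_log
  let K : ℝ → G := fun s => (5:ℝ) • ((((s^2) • (1:G) - (s * L s) • A (s^5)
      + ((L s)^2/2) • (A (s^5) * A (s^5)))) *
      ((s * L s) • A' (s^5) + ((L s)^2/2) • (A' (s^5) * A (s^5) + A (s^5) * A' (s^5))))
  have hK : ContinuousOn K (Icc 0 s0) := by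
    have := hL.continuousOn (s := Icc 0 s0)
    have h1 : ContinuousOn (fun s : ℝ => s) (Icc 0 s0) := continuousOn_id
    exact ((((h1.pow 2).smul continuousOn_const).sub ((h1.mul this).smul hAc)).add
      (((this.pow 2).div_const 2).smul (hAc.mul hAc))).mul (((h1.mul this).smul hAc').add
      (((this.pow 2).div_const 2).smul ((hAc'.mul hAc).add (hAc.mul hAc')))) |>.const_smul (5:ℝ)
  obtain ⟨C, hC⟩ := isCompact_Icc.exists_bound_of_continuousOn hK
  refine ⟨C, (norm_nonneg _).trans (hC s0 ⟨hs0.le, le_rfl⟩), K,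
    fun s hs => hC s ⟨hs.1.le, hs.2⟩, fun s hs => ?_⟩
  have hs5 := hm s ⟨hs.1.le, hs.2⟩
  have hspos : 0 < s := hs.1
  have ht : 0 < s^5 := by positivity
  set t := s^5 with htdef
  have dl : HasDerivAt (fun t => lam * Real.log t) (lam / t) t := by
    simpa [div_eq_mul_inv] using (Real.hasDerivAt_log ht.ne').const_mul lam
  have dA := hA t hs5
  have dT := hT t ⟨ht, hs5.2⟩
  have dl2 : HasDerivAt (fun t => (lam * Real.log t)^2/2) ((lam * Real.log t) * (lam / t)) t := by
    refine ((dl.pow 2).div_const 2).congr_deriv ?_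
    push_cast; ring
  have d1 := dT.mul (((dl.smul dA).const_add 1).add (dl2.smul (dA.mul dA)))
  have d5 : HasDerivAt (fun s : ℝ => s^5) (5 * s^4) s := by simpa using hasDerivAt_pow 5 s
  have d2 := HasDerivAt.scomp (h := fun s : ℝ => s^5) s d1 d5
  refine d2.congr_deriv ?_
  have hLs : L s = s * (lam * Real.log t) := by
    simp only [L, htdef, Real.log_pow]; push_cast; ring
  have h3t := h3 t hs5
  simp only [K, hLs, ← htdef, Pi.add_apply, Pi.mul_apply, Pi.smul_apply']
  clear d1 d2 dl dl2 dT dA d5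
  generalize A t = a at *
  generalize A' t = a' at *
  generalize T t = τ at *
  generalize lam * Real.log t = l at *
  generalize lam / t = m at *
  have h3' : a * (a * a) = 0 := by rw [← mul_assoc, h3t]
  have e1 : (1 + l • a + (l^2/2) • (a * a)) * ((s^2) • (1:G) - (s * (s * l)) • a
      + ((s * l)^2/2) • (a * a)) = (s^2) • (1:G) := by
    have h4 : a * a * (a * a) = 0 := by rw [← mul_assoc, h3t, zero_mul]
    simp only [mul_add, add_mul, mul_sub, sub_mul, smul_mul_assoc, mul_smul_comm, smul_smul, one_mul, mul_one, h3t, h3', h4, smul_zero]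
    module
  rw [mul_smul_comm, ← mul_assoc, mul_assoc τ, e1]
  simp only [mul_add, add_mul, smul_mul_assoc, mul_smul_comm, smul_smul, one_mul, mul_one, h3t, h3', smul_zero, mul_assoc, smul_add, neg_smul, neg_mul, mul_zero]
  module

lemma aux_lin (F K : ℝ → E n →L[ℝ] E n) (B : E n →L[ℝ] E n) (s0 C : ℝ) (hs0 : 0 < s0) (hC0 : 0 ≤ C)
    (hK : ∀ s ∈ Ioc 0 s0, ‖K s‖ ≤ C) (hF : ∀ s ∈ Ioc 0 s0, HasDerivAt F (F s * K s) s)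
    (hinv : F s0 * B = 1) :
    ∃ F0 : E n →L[ℝ] E n, Tendsto F (𝓝[>] 0) (𝓝 F0) ∧ Function.Injective F0.toLinearMap := by
  obtain ⟨κ, hlip⟩ := aux_lip F (fun s => F s * K s) s0 C hs0 hC0 hF (fun s hs => by
    calc ‖F s * K s‖ ≤ ‖F s‖ * ‖K s‖ := norm_mul_le _ _
      _ ≤ ‖F s‖ * C := by gcongr; exact hK s hs
      _ = C * ‖F s‖ := mul_comm _ _)
  obtain ⟨g, hg, hFg⟩ := hlip.extend_finite_dimension
  have hlim : Tendsto F (𝓝[>] 0) (𝓝 (g 0)) := by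
    refine (hg.continuous.continuousAt.tendsto.mono_left nhdsWithin_le_nhds).congr' ?_
    filter_upwards [Ioc_mem_nhdsGT hs0] with s hs using (hFg hs).symm
  -- surjectivity of the limit
  have hsurj : Function.Surjective (g 0).toLinearMap := by
    rw [← LinearMap.range_eq_top]
    by_contra hne
    obtain ⟨φ, hφ, hle⟩ := Submodule.exists_le_ker_of_lt_top _ (lt_top_iff_ne_top.2 hne)
    let ψ : E n →L[ℝ] ℝ := LinearMap.toContinuousLinearMap φ
    let Λ : (E n →L[ℝ] E n) →L[ℝ] (E n →L[ℝ] ℝ) := ContinuousLinearMap.compL ℝ (E n) (E n) ℝ ψ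
    have hΛ0 : Λ (g 0) = 0 := by
      ext x
      exact hle ⟨x, rfl⟩
    have hz : Λ (F s0) = 0 := by
      refine aux_zero (fun s => Λ (F s)) (fun s => Λ (F s * K s)) s0 C hs0 hC0
        (fun s hs => Λ.hasFDerivAt.comp_hasDerivAt s (hF s hs)) (fun s hs => ?_) ?_
      · have : Λ (F s * K s) = (Λ (F s)).comp (K s) := rfl
        rw [this]
        calc ‖(Λ (F s)).comp (K s)‖ ≤ ‖Λ (F s)‖ * ‖K s‖ := ContinuousLinearMap.opNorm_comp_le _ _
          _ ≤ ‖Λ (F s)‖ * C := by gcongr; exact hK s hs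
          _ = C * ‖Λ (F s)‖ := mul_comm _ _
      · rw [← hΛ0]
        exact (Λ.continuous.tendsto _).comp hlim
    apply hφ
    ext1 x
    have h5 := DFunLike.congr_fun hz (B x)
    have h6 := DFunLike.congr_fun hinv x
    rw [mul_apply_eq_comp, one_apply_eq_self] at h6
    have h7 : ψ (F s0 (B x)) = 0 := h5
    rw [h6] at h7
    exact h7
  have hinj : Function.Injective (g 0).toLinearMap := LinearMap.injective_iff_surjective.2 hsurj
  exact ⟨g 0, hlim, hinj⟩

lemma aux_inv_s11 {G : Type*} [Ring G] [Algebra ℝ G] (a : G) (l : ℝ) (h3p : a * a * a = 0) :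
    (1 + l • a + (l^2/2) • (a * a)) * (1 - l • a + (l^2/2) • (a * a)) = 1 := by
  have h3' : a * (a * a) = 0 := by rw [← mul_assoc, h3p]
  have h4 : a * a * (a * a) = 0 := by rw [← mul_assoc, h3p, zero_mul]
  simp only [mul_add, add_mul, mul_sub, smul_mul_assoc, mul_smul_comm, one_mul,
    mul_one, h3p, h3', h4, smul_zero]
  module

/-- Theorem 4.1: every Calapso transform of a polarized curve with a
first-order pole converges at the singularity. -/
theorem stmt11 {n : ℕ} (ε b : ℝ) (hε : 0 < ε) (hb : 0 < b)
    (c : ℝ → E n) (hc : ContDiffOn ℝ (⊤ : ℕ∞) c (Set.Ioo (-ε) b))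
    (hcnull : ∀ t ∈ Set.Ioo (-ε) b, mink (c t) (c t) = 0)
    (hcne : ∀ t ∈ Set.Ioo (-ε) b, c t ≠ 0)
    (hcreg : ∀ t ∈ Set.Ioo (-ε) b, 0 < mink (deriv c t) (deriv c t))
    (lam : ℝ) (p : ℝ) (hp : p ∈ Set.Ioo (0:ℝ) b)
    (T : ℝ → E n →L[ℝ] E n) (hTp : T p = 1)
    (hT : ∀ t ∈ Set.Ioo (0:ℝ) b,
      HasDerivAt T ((-(lam / t)) • (T t * wedge (c t) (deriv c t))) t) :
    ∃ x : E n, x ≠ 0 ∧ ∃ r : ℝ → ℝ, (∀ t ∈ Set.Ioo (0:ℝ) b, r t ≠ 0) ∧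
      Tendsto (fun t : ℝ => r t • (T t) (c t)) (𝓝[>] 0) (𝓝 x) := by
  have hsub : ∀ t ∈ Icc 0 p, t ∈ Ioo (-ε) b := fun t ht =>
    ⟨by linarith [ht.1], lt_of_le_of_lt ht.2 hp.2⟩
  have hcdiff : ContDiffOn ℝ (⊤ : ℕ∞) (deriv c) (Ioo (-ε) b) :=
    hc.deriv_of_isOpen isOpen_Ioo (by simp)
  have hcd : ∀ t ∈ Ioo (-ε) b, HasDerivAt c (deriv c t) t := fun t ht =>
    ((hc.differentiableOn (by simp)).differentiableAt (isOpen_Ioo.mem_nhds ht)).hasDerivAt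
  have horth : ∀ t ∈ Ioo (-ε) b, mink (c t) (deriv c t) = 0 := by
    intro t ht
    have h1 := hasDerivAt_mink c _ t (hcd t ht)
    have h2 : HasDerivAt (fun s => mink (c s) (c s)) 0 t :=
      (hasDerivAt_const t (0:ℝ)).congr_of_eventuallyEq (by
        filter_upwards [isOpen_Ioo.mem_nhds ht] with s hs using hcnull s hs)
    linarith [h1.unique h2]
  obtain ⟨A, hAdef⟩ : ∃ A : ℝ → E n →L[ℝ] E n, A = fun t => wedge (c t) (deriv c t) := ⟨_, rfl⟩
  have hAsm : ContDiffOn ℝ (⊤ : ℕ∞) A (Ioo (-ε) b) := by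
    rw [hAdef]
    exact contDiffOn_wedge c (deriv c) _ hc hcdiff
  have hAt : ∀ t, A t = wedge (c t) (deriv c t) := fun t => by rw [hAdef]
  obtain ⟨s0, hs0, hs0p⟩ : ∃ s0 : ℝ, 0 < s0 ∧ s0 ^ 5 = p :=
    ⟨p ^ ((5:ℕ):ℝ)⁻¹, Real.rpow_pos_of_pos hp.1 _, Real.rpow_inv_natCast_pow hp.1.le (by norm_num)⟩
  have h3 : ∀ t ∈ Icc 0 p, A t * A t * A t = 0 := fun t ht =>
    by rw [hAt]; exact wedge_cube _ _ (hcnull t (hsub t ht)) (horth t (hsub t ht))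
  obtain ⟨C, hC0, K, hK, hF⟩ := aux_main A (deriv A) T p lam s0 hs0 hs0p
    (fun t ht => ((hAsm.differentiableOn (by simp)).differentiableAt
      (isOpen_Ioo.mem_nhds (hsub t ht))).hasDerivAt)
    ((hAsm.continuousOn_deriv_of_isOpen isOpen_Ioo (by simp)).mono hsub) h3
    (fun t ht => by rw [hAt]; exact hT t ⟨ht.1, lt_of_le_of_lt ht.2 hp.2⟩)
  set F : ℝ → E n →L[ℝ] E n := fun s => T (s^5) * (1 + (lam * Real.log (s^5)) • A (s^5)
        + ((lam * Real.log (s^5))^2/2) • (A (s^5) * A (s^5))) with hFdef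
  obtain ⟨F0, hlim, hinj⟩ := aux_lin F K _ s0 C hs0 hC0 hK hF (by
    simp only [hFdef, hs0p, hTp, one_mul]
    exact aux_inv_s11 (A p) (lam * Real.log p) (h3 p ⟨hp.1.le, le_rfl⟩))
  have h0mem : (0:ℝ) ∈ Ioo (-ε) b := ⟨by linarith, hb⟩
  refine ⟨F0 (c 0), fun h => hcne 0 h0mem (hinj (by simpa using h)), fun _ => 1,
    fun _ _ => one_ne_zero, ?_⟩
  have hroot : Tendsto (fun t : ℝ => t ^ ((5:ℕ):ℝ)⁻¹) (𝓝[>] 0) (𝓝[>] 0) := by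
    refine tendsto_nhdsWithin_iff.2 ⟨?_, ?_⟩
    · have : ContinuousAt (fun t : ℝ => t ^ ((5:ℕ):ℝ)⁻¹) 0 :=
        Real.continuousAt_rpow_const _ _ (Or.inr (by positivity))
      have h := this.tendsto
      rw [Real.zero_rpow (by norm_num)] at h
      exact h.mono_left nhdsWithin_le_nhds
    · filter_upwards [self_mem_nhdsWithin] with t ht using Real.rpow_pos_of_pos ht _
  have hcc : Tendsto c (𝓝[>] 0) (𝓝 (c 0)) :=
    (hcd 0 h0mem).continuousAt.tendsto.mono_left nhdsWithin_le_nhds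
  have hfin : Tendsto (fun t => F (t ^ ((5:ℕ):ℝ)⁻¹) (c t)) (𝓝[>] 0) (𝓝 (F0 (c 0))) :=
    tendsto_apply_aux _ _ _ (fun t => F (t ^ ((5:ℕ):ℝ)⁻¹)) c (hlim.comp hroot) hcc
  refine hfin.congr' ?_
  filter_upwards [Ioo_mem_nhdsGT hb] with t ht
  have htt : (t ^ ((5:ℕ):ℝ)⁻¹) ^ 5 = t := Real.rpow_inv_natCast_pow ht.1.le (by norm_num)
  have htU : t ∈ Ioo (-ε) b := ⟨by linarith [ht.1], ht.2⟩
  have hAc : A t (c t) = 0 := by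
    have := horth t htU
    rw [hAt]
    simp only [wedge_apply, hcnull t htU, mink_comm (deriv c t), this, zero_smul, sub_zero]
  simp only [hFdef, htt, one_smul]
  simp [hAc]
end
end
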